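/- Let b be a positive integer, C₁, C₂, C₃ ≥ 1 real numbers, and let θ : ℤ₊ → ℝ be non-negative and not identically zero, represented as θ(n) = c·∏_{p^ν ∥ n} A_p(ν) · ∏_{p ∤ n} A_p(0) with c ∈ ℝ and non-negative A_p : ℕ → ℝ (with the convention that an infinite product converges if the partial products of its nonzero factors converge to a nonzero limit, and equals 0 if some factor vanishes), satisfying: (i) for all primes p and all ν ≥ 1, |A_p(ν) − A_p(ν−1)| ≤ C₁ if p^ν | b and |A_p(ν) − A_p(ν−1)| ≤ C₂·p^{−ν} if p^ν ∤ b; and (ii) for all positive integers k, |c·∏_{p ∤ k} A_p(0)| ≤ C₃. Then for every positive integer q, the infinite sum ∑_{n > 0, gcd(n,q)=1} (θ∗μ)(n)/n and the infinite product c·∏_{p ∤ q} [ (1 − 1/p)·∑_{ν=0}^∞ A_p(ν)/p^ν ] · ∏_{p | q} A_p(0) both converge, and they converge to the same real number. -/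

import Mathlib

/-!
Write `D_p(ν) = (A_p(ν) - A_p(ν - 1)) / p^ν`. Expanding the Möbius sum over squarefree divisors gives
`(θ ∗ μ)(n) / n = c ∏_{p^ν ∥ n} D_p(ν) · ∏_{p ∤ n} A_p(0)` (`EulerRep.dconv_eq`), and summation by
parts gives `(1 - 1/p) ∑_ν A_p(ν) / p^ν = A_p(0) + ∑_{ν ≥ 1} D_p(ν)` (`one_sub_inv_mul_tsum`). The
theorem is therefore an Euler product whose factors have constant terms `A_p(0)` instead of `1`.

Choose `n₀` with `θ(n₀) ≠ 0` and put `m = n₀ q`. Then `∏_{p ∤ m} A_p(0)` has a nonzero limit, so that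
`A_p(0) ≠ 0` for `p ∤ m`, and `A_p(0) ≥ 1/2` for all but finitely many primes. Dividing by `A_p(0)`
at the primes `p ∤ m` normalizes the constant terms there to `1`, and the smallness condition
`|D_p(ν)| ≤ C₂ p^{-2ν}` for `p ∤ b` makes everything absolutely convergent
(`SmallCond.locallySummable`). The finitely many primes dividing `m` may have `A_p(0) = 0` and cannot
be normalized. They are handled by `hasSum_eulerTerm`, an induction on the set of unnormalized
primes that starts from the Euler product for multiplicative functions and uses that the summand
is affine in each `A_p(0)`. Multiplying back by `∏_{p ∤ m} A_p(0)` gives the claim.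
-/

open scoped Classical

/-- The Dirichlet convolution `θ ∗ μ` of a real-valued arithmetic function with the Möbius
function. -/
noncomputable def dconv (θ : ℕ → ℝ) (n : ℕ) : ℝ :=
  ∑ d ∈ n.divisors, (ArithmeticFunction.moebius d : ℝ) * θ (n / d)

/-- `θ` is represented by the constant `c` and the local data `A` in the sense that
`θ(n) = c · ∏_{p^ν ∥ n} A_p(ν) · ∏_{p ∤ n} A_p(0)`, the infinite product over the primes not
dividing `n` being convergent. -/
def EulerRep (θ : ℕ → ℝ) (c : ℝ) (A : ℕ → ℕ → ℝ) : Prop :=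
  (∀ p ν : ℕ, p.Prime → 0 ≤ A p ν) ∧
  (∀ n : ℕ, 0 < n → Multipliable (fun p : {p : ℕ // p.Prime ∧ ¬ p ∣ n} => A p.1 0)) ∧
  (∀ n : ℕ, 0 < n →
    θ n = c * (∏ p ∈ n.primeFactors, A p (n.factorization p)) *
      ∏' p : {p : ℕ // p.Prime ∧ ¬ p ∣ n}, A p.1 0)

/-- The local data `c, A` satisfies the smallness conditions of the set `Θ₂(b, C₁, C₂, C₃)`. -/
def SmallCond (b : ℕ) (C₁ C₂ C₃ c : ℝ) (A : ℕ → ℕ → ℝ) : Prop :=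
  (∀ p ν : ℕ, p.Prime → 1 ≤ ν →
    (p ^ ν ∣ b → |A p ν - A p (ν - 1)| ≤ C₁) ∧
    (¬ p ^ ν ∣ b → |A p ν - A p (ν - 1)| ≤ C₂ / (p : ℝ) ^ ν)) ∧
  (∀ k : ℕ, 0 < k → |c * ∏' p : {p : ℕ // p.Prime ∧ ¬ p ∣ k}, A p.1 0| ≤ C₃)

/-! ### Euler products with finitely many unnormalized factors -/

/-- For local data `a` and a finite set `S` of primes, the product of `a p (v_p n)` over the primes
`p` that lie in `S` or divide `n`. Primes outside `S` that do not divide `n` contribute the factor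
`1`, so only the primes in `S` have a free value `a p 0`. The value at `n = 0` is `0`. -/
noncomputable def eulerTerm (S : Finset ℕ) (a : ℕ → ℕ → ℝ) (n : ℕ) : ℝ :=
  if n = 0 then 0 else
    (∏ p ∈ S, a p (n.factorization p)) * ∏ p ∈ n.primeFactors \ S, a p (n.factorization p)

/-- Absolute convergence of the double sum of `a p ν` over the primes `p` and the exponents
`ν ≥ 1`. Nothing is required of the values `a p 0`. -/
structure LocallySummable (a : ℕ → ℕ → ℝ) : Prop where
  at_prime : ∀ p : ℕ, p.Prime → Summable fun ν : ℕ => |a p (ν + 1)|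
  total : Summable fun p : ℕ => if p.Prime then ∑' ν : ℕ, |a p (ν + 1)| else 0

theorem eulerTerm_empty_one (a : ℕ → ℕ → ℝ) : eulerTerm ∅ a 1 = 1 := by
  simp [eulerTerm]

theorem eulerTerm_empty_mul (a : ℕ → ℕ → ℝ) {m n : ℕ} (h : Nat.Coprime m n) :
    eulerTerm ∅ a (m * n) = eulerTerm ∅ a m * eulerTerm ∅ a n := by
  rcases eq_or_ne m 0 with rfl | hm
  · simp [eulerTerm]
  rcases eq_or_ne n 0 with rfl | hn
  · simp [eulerTerm]
  simp only [eulerTerm, mul_eq_zero, hm, hn, or_self, if_false, Finset.prod_empty, one_mul,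
    Finset.sdiff_empty]
  rw [h.primeFactors_mul, Finset.prod_union h.disjoint_primeFactors]
  congr 1
  · refine Finset.prod_congr rfl fun p hp => ?_
    rw [Nat.factorization_eq_of_coprime_left h (by simpa only [Nat.primeFactors, List.mem_toFinset] using hp)]
  · refine Finset.prod_congr rfl fun p hp => ?_
    rw [Nat.factorization_eq_of_coprime_right h (by simpa only [Nat.primeFactors, List.mem_toFinset] using hp)]

theorem eulerTerm_empty_prime_pow_succ (a : ℕ → ℕ → ℝ) {p : ℕ} (hp : p.Prime) (e : ℕ) :
    eulerTerm ∅ a (p ^ (e + 1)) = a p (e + 1) := by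
  simp [eulerTerm, hp.ne_zero, Nat.primeFactors_prime_pow, hp]

theorem eulerTerm_empty_abs (a : ℕ → ℕ → ℝ) (n : ℕ) :
    eulerTerm ∅ (fun p ν => |a p ν|) n = |eulerTerm ∅ a n| := by
  simp only [eulerTerm]
  split_ifs <;> simp [Finset.abs_prod]

theorem tsum_eulerTerm_prime_pow (a : ℕ → ℕ → ℝ) {p : ℕ} (hp : p.Prime)
    (h : Summable fun ν : ℕ => |a p (ν + 1)|) :
    (Summable fun e : ℕ => ‖eulerTerm ∅ a (p ^ e)‖) ∧
      ∑' e : ℕ, eulerTerm ∅ a (p ^ e) = 1 + ∑' ν : ℕ, a p (ν + 1) := by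
  have h1 : Summable fun e : ℕ => ‖eulerTerm ∅ a (p ^ e)‖ := by
    rw [← summable_nat_add_iff 1]
    simpa only [eulerTerm_empty_prime_pow_succ a hp, Real.norm_eq_abs] using h
  refine ⟨h1, ?_⟩
  rw [h1.of_norm.tsum_eq_zero_add]
  simp only [eulerTerm_empty_prime_pow_succ a hp, pow_zero, eulerTerm_empty_one]

/-- The partial sums of `|eulerTerm ∅ a|` are bounded by sums over smooth numbers, that is by
finite products `∏ (1 + u p) ≤ exp (∑ u p)` with `u p = ∑_{ν ≥ 1} |a p ν|`. -/
theorem summable_eulerTerm_empty (a : ℕ → ℕ → ℝ) (ha : LocallySummable a) :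
    Summable fun n : ℕ => ‖eulerTerm ∅ a n‖ := by
  set a' : ℕ → ℕ → ℝ := fun p ν => |a p ν| with ha'
  set u : ℕ → ℝ := fun p => if p.Prime then ∑' ν : ℕ, |a p (ν + 1)| else 0 with hu
  have hu0 : ∀ p, 0 ≤ u p := fun p => by
    simp only [hu]; split_ifs
    · exact tsum_nonneg fun _ => abs_nonneg _
    · exact le_rfl
  have hloc : ∀ p : ℕ, p.Prime → Summable fun ν : ℕ => |a' p (ν + 1)| := fun p hp => by
    simpa [ha'] using ha.at_prime p hp
  refine summable_of_sum_le (c := Real.exp (∑' p, u p)) (fun _ => norm_nonneg _) fun t => ?_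
  simp only [Real.norm_eq_abs, ← eulerTerm_empty_abs]
  obtain ⟨N, hN⟩ : ∃ N : ℕ, ∀ n ∈ t, n < N :=
    ⟨t.sup id + 1, fun n hn => Nat.lt_succ_of_le (Finset.le_sup (f := id) hn)⟩
  have key := EulerProduct.summable_and_hasSum_smoothNumbers_prod_primesBelow_tsum
    (eulerTerm_empty_one a') (fun {m n} h => eulerTerm_empty_mul a' h)
    (fun {p} hp => (tsum_eulerTerm_prime_pow a' hp (hloc p hp)).1) N
  have hnn : ∀ n, 0 ≤ eulerTerm ∅ a' n := fun n => by
    rw [eulerTerm_empty_abs]; exact abs_nonneg _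
  have h1 : ∑ n ∈ t, eulerTerm ∅ a' n ≤ ∏ p ∈ N.primesBelow, ∑' e : ℕ, eulerTerm ∅ a' (p ^ e) := by
    have h2 : HasSum ((N.smoothNumbers).indicator (eulerTerm ∅ a'))
        (∏ p ∈ N.primesBelow, ∑' e : ℕ, eulerTerm ∅ a' (p ^ e)) :=
      hasSum_subtype_iff_indicator.1 key.2
    refine le_trans (Finset.sum_le_sum fun n hn => ?_)
      (sum_le_hasSum t (fun n _ => Set.indicator_nonneg (fun x _ => hnn x) n) h2)
    rcases eq_or_ne n 0 with rfl | h0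
    · rw [show eulerTerm ∅ a' 0 = 0 by simp [eulerTerm]]
      exact Set.indicator_nonneg (fun x _ => hnn x) 0
    · rw [Set.indicator_of_mem
        (Nat.mem_smoothNumbers_of_lt (Nat.pos_of_ne_zero h0) (hN n hn))]
  refine h1.trans ?_
  calc ∏ p ∈ N.primesBelow, ∑' e : ℕ, eulerTerm ∅ a' (p ^ e)
      = ∏ p ∈ N.primesBelow, (1 + u p) := Finset.prod_congr rfl fun p hp => by
        have hpp := Nat.prime_of_mem_primesBelow hp
        rw [(tsum_eulerTerm_prime_pow a' hpp (hloc p hpp)).2]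
        simp [hu, hpp, ha']
    _ ≤ Real.exp (∑ p ∈ N.primesBelow, u p) := Real.prod_one_add_le_exp_sum _ hu0
    _ ≤ _ := Real.exp_le_exp.2 (ha.total.sum_le_tsum _ fun p _ => hu0 p)

theorem hasProd_subtype_iff_ite (Q : ℕ → Prop) [DecidablePred Q] (g : ℕ → ℝ) (x : ℝ) :
    HasProd (fun p : {p : ℕ // Q p} => g p.1) x ↔
      HasProd (fun p : ℕ => if Q p then g p else 1) x := by
  have h := hasProd_subtype_iff_mulIndicator (f := g) (a := x) (s := {p | Q p})
  have e : ({p | Q p} : Set ℕ).mulIndicator g = fun p : ℕ => if Q p then g p else 1 := by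
    ext p; simp [Set.mulIndicator_apply]
  rw [e] at h
  exact h

/-- The Euler product, with arbitrary (possibly vanishing) constant terms `a p 0` at the primes of
`S`. The induction on `S` uses that the summand is affine in `a p₀ 0`: adjoining `p₀` to `S` adds
`a p₀ 0 - 1` times the summand of the data in which `p₀` is switched off. -/
theorem hasSum_eulerTerm (S : Finset ℕ) (hS : ∀ p ∈ S, p.Prime) :
    ∀ (a : ℕ → ℕ → ℝ), LocallySummable a → ∀ R : ℝ,
      HasProd (fun p : ℕ => if p.Prime ∧ p ∉ S then 1 + ∑' ν : ℕ, a p (ν + 1) else 1) R →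
      HasSum (eulerTerm S a) ((∏ p ∈ S, (a p 0 + ∑' ν : ℕ, a p (ν + 1))) * R) := by
  induction S using Finset.induction_on with
  | empty =>
    intro a ha R hR
    have hs := summable_eulerTerm_empty a ha
    have h := EulerProduct.eulerProduct_hasProd (eulerTerm_empty_one a)
      (fun {m n} h => eulerTerm_empty_mul a h) hs (by simp [eulerTerm])
    have h' : HasProd (fun p : Nat.Primes => 1 + ∑' ν : ℕ, a p.1 (ν + 1))
        (∑' n, eulerTerm ∅ a n) := by
      have e : (fun p : Nat.Primes => ∑' e : ℕ, eulerTerm ∅ a ((p : ℕ) ^ e))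
          = fun p : Nat.Primes => 1 + ∑' ν : ℕ, a p.1 (ν + 1) :=
        funext fun p => (tsum_eulerTerm_prime_pow a p.2 (ha.at_prime p.1 p.2)).2
      rwa [e] at h
    have h2 := (hasProd_subtype_iff_ite Nat.Prime (fun p => 1 + ∑' ν : ℕ, a p (ν + 1)) _).1 h'
    simp only [Finset.notMem_empty, not_false_eq_true, and_true] at hR
    rw [Finset.prod_empty, one_mul, hR.unique h2]
    exact hs.of_norm.hasSum
  | insert p₀ S hp₀ ih =>
    intro a ha R hR
    have hpr : p₀.Prime := hS p₀ (Finset.mem_insert_self _ _)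
    have ih := ih fun p hp => hS p (Finset.mem_insert_of_mem hp)
    -- the data with all terms at `p₀` of exponent `≥ 1` removed
    set a' : ℕ → ℕ → ℝ := Function.update a p₀ 0 with ha'
    have hne : ∀ p, p ≠ p₀ → a' p = a p := fun p hp => Function.update_of_ne hp _ _
    have heq : a' p₀ = 0 := Function.update_self _ _ _
    have hls : LocallySummable a' := by
      refine ⟨fun p hp => ?_, ?_⟩
      · rcases eq_or_ne p p₀ with rfl | h
        · simp [heq, summable_zero]
        · rw [hne p h]; exact ha.at_prime p hp
      · refine Summable.of_nonneg_of_le (fun p => ?_) (fun p => ?_) ha.total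
        · split_ifs
          · exact tsum_nonneg fun _ => abs_nonneg _
          · exact le_rfl
        · split_ifs
          · rcases eq_or_ne p p₀ with rfl | h
            · simpa [heq] using tsum_nonneg fun _ => abs_nonneg _
            · rw [hne p h]
          · exact le_rfl
    have h1 : HasProd (fun p : ℕ => if p.Prime ∧ p ∉ S then 1 + ∑' ν : ℕ, a p (ν + 1) else 1)
        ((1 + ∑' ν : ℕ, a p₀ (ν + 1)) * R) := by
      have := (hasProd_ite_eq p₀ (1 + ∑' ν : ℕ, a p₀ (ν + 1))).mul hR
      convert this using 2 with p
      rcases eq_or_ne p p₀ with rfl | h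
      · simp [hpr, hp₀]
      · simp [h]
    have h2 : HasProd (fun p : ℕ => if p.Prime ∧ p ∉ S then 1 + ∑' ν : ℕ, a' p (ν + 1) else 1)
        R := by
      convert hR using 2 with p
      rcases eq_or_ne p p₀ with rfl | h
      · simp [heq]
      · simp [h, hne p h]
    have h3 := (ih a ha _ h1).add ((ih a' hls _ h2).mul_left (a p₀ 0 - 1))
    have hprod : ∏ p ∈ S, (a' p 0 + ∑' ν : ℕ, a' p (ν + 1))
        = ∏ p ∈ S, (a p 0 + ∑' ν : ℕ, a p (ν + 1)) :=
      Finset.prod_congr rfl fun p hp => by rw [hne p (ne_of_mem_of_not_mem hp hp₀)]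
    rw [hprod] at h3
    rw [Finset.prod_insert hp₀]
    convert h3 using 1
    · ext n
      rcases eq_or_ne n 0 with rfl | hn
      · simp [eulerTerm]
      have hSp : ∏ p ∈ S, a' p (n.factorization p) = ∏ p ∈ S, a p (n.factorization p) :=
        Finset.prod_congr rfl fun p hp => by rw [hne p (ne_of_mem_of_not_mem hp hp₀)]
      simp only [eulerTerm, hn, if_false, hSp, Finset.prod_insert hp₀]
      by_cases hd : p₀ ∈ n.primeFactors
      · have hm : p₀ ∈ n.primeFactors \ S := Finset.mem_sdiff.2 ⟨hd, hp₀⟩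
        have hz : ∏ p ∈ n.primeFactors \ S, a' p (n.factorization p) = 0 :=
          Finset.prod_eq_zero hm (by simp [heq])
        rw [hz, ← Finset.mul_prod_erase _ _ hm, Finset.sdiff_insert]
        ring
      · have hz : ∏ p ∈ n.primeFactors \ S, a' p (n.factorization p)
            = ∏ p ∈ n.primeFactors \ S, a p (n.factorization p) :=
          Finset.prod_congr rfl fun p hp => by
            rw [hne p (ne_of_mem_of_not_mem (Finset.mem_sdiff.1 hp).1 hd)]
        have he : n.primeFactors \ insert p₀ S = n.primeFactors \ S := by
          rw [Finset.sdiff_insert, Finset.erase_eq_of_notMem]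
          simp [hd]
        have h0 : n.factorization p₀ = 0 := by
          rwa [← Nat.support_factorization, Finsupp.notMem_support_iff] at hd
        rw [hz, he, h0]
        ring
    · ring

/-! ### Products over the primes not dividing `n`, and a formula for `θ ∗ μ` -/

/-- Enlarging the set of primes from those not dividing `m` to those not dividing `k ∣ m` adds only
finitely many factors. No factor needs to be nonzero. -/
theorem hasProd_away_of_dvd (g : ℕ → ℝ) {k m : ℕ} (hm : 0 < m) (hkm : k ∣ m) {x : ℝ}
    (h : HasProd (fun p : {p : ℕ // p.Prime ∧ ¬ p ∣ m} => g p.1) x) :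
    HasProd (fun p : {p : ℕ // p.Prime ∧ ¬ p ∣ k} => g p.1)
      ((∏ p ∈ m.primeFactors \ k.primeFactors, g p) * x) := by
  have hk : k ≠ 0 := fun h0 => hm.ne' (by simpa [h0] using hkm)
  rw [hasProd_subtype_iff_ite (fun p => p.Prime ∧ ¬ p ∣ k) g]
  rw [hasProd_subtype_iff_ite (fun p => p.Prime ∧ ¬ p ∣ m) g] at h
  have h1 : HasProd (fun p => if p ∈ m.primeFactors \ k.primeFactors then g p else 1)
      (∏ p ∈ m.primeFactors \ k.primeFactors, g p) := by
    have := hasProd_prod_of_ne_finset_one (L := SummationFilter.unconditional ℕ)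
      (s := m.primeFactors \ k.primeFactors)
      (f := fun p => if p ∈ m.primeFactors \ k.primeFactors then g p else 1)
      (fun p hp => if_neg hp)
    rwa [Finset.prod_congr rfl fun p hp => if_pos hp] at this
  have h2 := h1.mul h
  have e : (fun p : ℕ => if p.Prime ∧ ¬ p ∣ k then g p else 1) = fun p =>
      (if p ∈ m.primeFactors \ k.primeFactors then g p else 1) *
        if p.Prime ∧ ¬ p ∣ m then g p else 1 := by
    funext p
    by_cases hp : p.Prime
    · by_cases h1 : p ∣ k
      · simp [hp, h1, hk, h1.trans hkm]
      · by_cases h2 : p ∣ m <;> simp [hp, h1, h2, hk, hm.ne']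
    · simp [hp]
  rw [e]
  exact h2

/-- The product of `A_p(0)` over the primes `p` not dividing `n`. -/
noncomputable def awayProd (A : ℕ → ℕ → ℝ) (n : ℕ) : ℝ :=
  ∏' p : {p : ℕ // p.Prime ∧ ¬ p ∣ n}, A p.1 0

theorem awayProd_of_dvd {A : ℕ → ℕ → ℝ}
    (hA : ∀ n : ℕ, 0 < n → Multipliable (fun p : {p : ℕ // p.Prime ∧ ¬ p ∣ n} => A p.1 0))
    {k m : ℕ} (hm : 0 < m) (hkm : k ∣ m) :
    awayProd A k = (∏ p ∈ m.primeFactors \ k.primeFactors, A p 0) * awayProd A m :=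
  (hasProd_away_of_dvd (fun p => A p 0) hm hkm (hA m hm).hasProd).tprod_eq

/-- The values of `θ` at the divisors of `n`, all written with the product over the primes not
dividing `n`. -/
theorem EulerRep.apply_of_dvd {θ : ℕ → ℝ} {c : ℝ} {A : ℕ → ℕ → ℝ} (h : EulerRep θ c A)
    {m n : ℕ} (hn : 0 < n) (hmn : m ∣ n) :
    θ m = c * (∏ p ∈ n.primeFactors, A p (m.factorization p)) * awayProd A n := by
  have hm : 0 < m := Nat.pos_of_dvd_of_pos hmn hn
  have hW : (∏' p : {p : ℕ // p.Prime ∧ ¬ p ∣ m}, A p.1 0) = _ := awayProd_of_dvd h.2.1 hn hmn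
  rw [h.2.2 m hm, hW, ← Finset.prod_sdiff (Nat.primeFactors_mono hmn hn.ne')]
  have e : ∏ p ∈ n.primeFactors \ m.primeFactors, A p (m.factorization p)
      = ∏ p ∈ n.primeFactors \ m.primeFactors, A p 0 :=
    Finset.prod_congr rfl fun p hp => by
      have := (Finset.mem_sdiff.1 hp).2
      rw [← Nat.support_factorization, Finsupp.notMem_support_iff] at this
      rw [this]
  rw [e]
  ring

/-- Only squarefree `d ∣ n`, that is subsets of the primes dividing `n`, contribute to
`(θ ∗ μ)(n)`, and the resulting sum is the expansion of a product of differences. -/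
theorem EulerRep.dconv_eq {θ : ℕ → ℝ} {c : ℝ} {A : ℕ → ℕ → ℝ} (h : EulerRep θ c A)
    {n : ℕ} (hn : 0 < n) :
    dconv θ n = c * (∏ p ∈ n.primeFactors,
      (A p (n.factorization p) - A p (n.factorization p - 1))) * awayProd A n := by
  have hfac : (UniqueFactorizationMonoid.normalizedFactors n).toFinset = n.primeFactors := by
    rw [Nat.factors_eq]; rfl
  have h1 : dconv θ n = ∑ d ∈ n.divisors with Squarefree d,
      (ArithmeticFunction.moebius d : ℝ) * θ (n / d) := by
    rw [dconv, Finset.sum_filter_of_ne]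
    intro d _ hd
    by_contra hsq
    exact hd (by simp [ArithmeticFunction.moebius_eq_zero_of_not_squarefree hsq])
  rw [h1, Nat.sum_divisors_filter_squarefree hn.ne', hfac, Finset.prod_sub, Finset.mul_sum,
    Finset.sum_mul]
  refine Finset.sum_congr rfl fun t ht => ?_
  have ht := Finset.mem_powerset.1 ht
  have htp : ∀ p ∈ t, p.Prime := fun p hp => Nat.prime_of_mem_primeFactors (ht hp)
  have hd : t.val.prod = ∏ p ∈ t, p := by rw [Finset.prod_val]; rfl
  have hdn : (∏ p ∈ t, p) ∣ n :=
    (Finset.prod_dvd_prod_of_subset _ _ _ ht).trans (Nat.prod_primeFactors_dvd n)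
  have hmu : (ArithmeticFunction.moebius (∏ p ∈ t, p) : ℝ) = (-1) ^ t.card := by
    rw [ArithmeticFunction.isMultiplicative_moebius.map_prod_of_subset_primeFactors n t ht,
      Finset.prod_congr rfl fun p hp =>
        ArithmeticFunction.moebius_apply_prime (htp p hp)]
    simp
  have hv : ∀ p, (∏ p ∈ t, p).factorization p = if p ∈ t then 1 else 0 := fun p => by
    rw [Nat.factorization_prod fun p hp => (htp p hp).ne_zero, Finsupp.finsetSum_apply,
      Finset.sum_congr rfl fun q hq => by
        rw [(htp q hq).factorization, Finsupp.single_apply]]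
    simp
  rw [hd, hmu, h.apply_of_dvd hn (Nat.div_dvd_of_dvd hdn), ← Finset.prod_sdiff ht]
  have e1 : ∏ p ∈ n.primeFactors \ t, A p ((n / ∏ p ∈ t, p).factorization p)
      = ∏ p ∈ n.primeFactors \ t, A p (n.factorization p) :=
    Finset.prod_congr rfl fun p hp => by
      rw [Nat.factorization_div hdn, Finsupp.tsub_apply, hv, if_neg (Finset.mem_sdiff.1 hp).2,
        Nat.sub_zero]
  have e2 : ∏ p ∈ t, A p ((n / ∏ p ∈ t, p).factorization p)
      = ∏ p ∈ t, A p (n.factorization p - 1) :=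
    Finset.prod_congr rfl fun p hp => by
      rw [Nat.factorization_div hdn, Finsupp.tsub_apply, hv, if_pos hp]
  rw [e1, e2]
  ring

/-! ### Bounds on the local data -/

/-- The local factor `(A_p(ν) - A_p(ν - 1)) / p^ν` of `(θ ∗ μ)(n) / n` at a prime with `p^ν ∥ n`,
meaningful for `ν ≥ 1`; by truncated subtraction the value at `ν = 0` is `0`. -/
noncomputable def localTerm (A : ℕ → ℕ → ℝ) (p ν : ℕ) : ℝ :=
  (A p ν - A p (ν - 1)) / (p : ℝ) ^ ν

theorem SmallCond.abs_sub_le {b : ℕ} {C₁ C₂ C₃ c : ℝ} {A : ℕ → ℕ → ℝ} (hC₁ : 1 ≤ C₁)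
    (hC₂ : 1 ≤ C₂) (h : SmallCond b C₁ C₂ C₃ c A) {p : ℕ} (hp : p.Prime) (ν : ℕ) :
    |A p (ν + 1) - A p ν| ≤ C₁ + C₂ := by
  have h1 := h.1 p (ν + 1) hp (by omega)
  rw [Nat.add_sub_cancel] at h1
  by_cases hd : p ^ (ν + 1) ∣ b
  · linarith [h1.1 hd]
  · have hp1 : (1 : ℝ) ≤ (p : ℝ) ^ (ν + 1) :=
      one_le_pow₀ (by exact_mod_cast hp.one_lt.le)
    have := div_le_self (by linarith : 0 ≤ C₂) hp1
    linarith [h1.2 hd]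

theorem SmallCond.summable_localTerm {b : ℕ} {C₁ C₂ C₃ c : ℝ} {A : ℕ → ℕ → ℝ} (hC₁ : 1 ≤ C₁)
    (hC₂ : 1 ≤ C₂) (h : SmallCond b C₁ C₂ C₃ c A) {p : ℕ} (hp : p.Prime) :
    Summable fun ν : ℕ => |localTerm A p (ν + 1)| := by
  have hp1 : (1 : ℝ) < p := by exact_mod_cast hp.one_lt
  have hg : Summable fun ν : ℕ => (C₁ + C₂) * ((p : ℝ)⁻¹) ^ ν :=
    (summable_geometric_of_lt_one (by positivity) (inv_lt_one_of_one_lt₀ hp1)).mul_left _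
  rw [← summable_nat_add_iff 1] at hg
  refine Summable.of_nonneg_of_le (fun _ => abs_nonneg _) (fun ν => ?_) hg
  have hpos : (0 : ℝ) < (p : ℝ) ^ (ν + 1) := by positivity
  rw [localTerm, Nat.add_sub_cancel, abs_div, abs_of_pos hpos, inv_pow, ← div_eq_mul_inv]
  gcongr
  exact h.abs_sub_le hC₁ hC₂ hp ν

theorem SmallCond.summable_div_pow {b : ℕ} {C₁ C₂ C₃ c : ℝ} {A : ℕ → ℕ → ℝ} (hC₁ : 1 ≤ C₁)
    (hC₂ : 1 ≤ C₂) (h : SmallCond b C₁ C₂ C₃ c A) {p : ℕ} (hp : p.Prime) :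
    Summable fun ν : ℕ => A p ν / (p : ℝ) ^ ν := by
  have hp1 : (1 : ℝ) < p := by exact_mod_cast hp.one_lt
  have hr : ‖((p : ℝ)⁻¹)‖ < 1 := by
    rw [Real.norm_eq_abs, abs_of_pos (by positivity)]
    exact inv_lt_one_of_one_lt₀ hp1
  have hA : ∀ ν : ℕ, |A p ν| ≤ |A p 0| + (C₁ + C₂) * ν := fun ν => by
    induction ν with
    | zero => simp
    | succ ν ih =>
      have h1 := abs_sub_abs_le_abs_sub (A p (ν + 1)) (A p ν)
      have h2 := h.abs_sub_le hC₁ hC₂ hp ν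
      push_cast
      linarith
  have hg : Summable fun ν : ℕ =>
      |A p 0| * ((p : ℝ)⁻¹) ^ ν + (C₁ + C₂) * ((ν : ℝ) ^ 1 * ((p : ℝ)⁻¹) ^ ν) :=
    ((summable_geometric_of_norm_lt_one hr).mul_left _).add
      ((summable_pow_mul_geometric_of_norm_lt_one 1 hr).mul_left _)
  refine hg.of_norm_bounded fun ν => ?_
  have hpos : (0 : ℝ) < (p : ℝ) ^ ν := by positivity
  rw [norm_div, Real.norm_eq_abs, Real.norm_eq_abs, abs_of_pos hpos, div_eq_mul_inv, inv_pow]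
  calc |A p ν| * ((p : ℝ) ^ ν)⁻¹ ≤ (|A p 0| + (C₁ + C₂) * ν) * ((p : ℝ) ^ ν)⁻¹ := by
        gcongr; exact hA ν
    _ = _ := by ring

/-- Summation by parts for the local factor of the product. -/
theorem one_sub_inv_mul_tsum {A : ℕ → ℕ → ℝ} {p : ℕ} (hp : p.Prime)
    (h : Summable fun ν : ℕ => A p ν / (p : ℝ) ^ ν) :
    (1 - 1 / (p : ℝ)) * ∑' ν : ℕ, A p ν / (p : ℝ) ^ ν
      = A p 0 + ∑' ν : ℕ, localTerm A p (ν + 1) := by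
  have hp0 : (p : ℝ) ≠ 0 := by exact_mod_cast hp.ne_zero
  have e : ∀ ν : ℕ, localTerm A p (ν + 1)
      = A p (ν + 1) / (p : ℝ) ^ (ν + 1) - 1 / (p : ℝ) * (A p ν / (p : ℝ) ^ ν) := fun ν => by
    rw [localTerm, Nat.add_sub_cancel]
    field_simp
    ring
  simp only [e]
  rw [((summable_nat_add_iff 1).2 h).tsum_sub (h.mul_left _), tsum_mul_left]
  have h0 := h.tsum_eq_zero_add
  simp only [pow_zero, div_one] at h0
  linarith

/-- Passing from a large finset to one with a single extra index changes a product with nonzero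
limit by a factor close to `1`. -/
theorem eventually_half_le_abs_of_hasProd {g : ℕ → ℝ} {P : ℝ} (h : HasProd g P) (hP : P ≠ 0) :
    ∀ᶠ p in Filter.cofinite, 1 / 2 ≤ |g p| := by
  have h1 : Filter.Tendsto (fun s : Finset ℕ => |∏ p ∈ s, g p|) Filter.atTop (nhds |P|) := by
    have := h
    rw [HasProd, SummationFilter.unconditional_filter] at this
    exact this.abs
  have hpos : 0 < |P| := abs_pos.2 hP
  have h2 := (h1.eventually (lt_mem_nhds (by linarith : |P| * (2 / 3) < |P|))).and
    (h1.eventually (gt_mem_nhds (by linarith : |P| < |P| * (4 / 3))))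
  obtain ⟨s, hs⟩ := Filter.eventually_atTop.1 h2
  refine Filter.eventually_cofinite.2 (s.finite_toSet.subset fun p hp => ?_)
  by_contra hps
  have hps : p ∉ s := hps
  have ha := (hs s le_rfl).2
  have hb := (hs (insert p s) (Finset.subset_insert _ _)).1
  rw [Finset.prod_insert hps, abs_mul] at hb
  have hc : |g p| < 1 / 2 := lt_of_not_ge hp
  nlinarith [abs_nonneg (g p), abs_nonneg (∏ p ∈ s, g p)]

theorem SmallCond.abs_localTerm_le {b : ℕ} {C₁ C₂ C₃ c : ℝ} {A : ℕ → ℕ → ℝ}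
    (hC₂ : 1 ≤ C₂) (h : SmallCond b C₁ C₂ C₃ c A) {p : ℕ} (hp : p.Prime) (hpb : ¬ p ∣ b) (ν : ℕ) :
    |localTerm A p (ν + 1)| ≤ C₂ / (p : ℝ) ^ 2 * (1 / 4) ^ ν := by
  have hp2 : (2 : ℝ) ≤ p := by exact_mod_cast hp.two_le
  have h1 := (h.1 p (ν + 1) hp (by omega)).2
    fun hd => hpb ((dvd_pow_self p (by omega)).trans hd)
  have hpos : (0 : ℝ) < (p : ℝ) ^ (ν + 1) := by positivity
  have h4 : (4 : ℝ) ^ ν ≤ ((p : ℝ) ^ 2) ^ ν := pow_le_pow_left₀ (by norm_num) (by nlinarith) ν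
  rw [localTerm, abs_div, abs_of_pos hpos]
  calc _ ≤ C₂ / (p : ℝ) ^ (ν + 1) / (p : ℝ) ^ (ν + 1) := by gcongr
    _ = C₂ / (p : ℝ) ^ 2 * (1 / ((p : ℝ) ^ 2) ^ ν) := by
        have hp0 : (p : ℝ) ≠ 0 := by positivity
        field_simp
        ring
    _ ≤ C₂ / (p : ℝ) ^ 2 * (1 / 4 ^ ν) := by gcongr
    _ = _ := by rw [one_div_pow]

/-! ### The summand as an Euler term -/

/-- The factor by which the local terms at `p` are rescaled: outside `S` they are normalized by
`A_p(0)`, inside `S` they are kept, except that at `p ∣ q` they are removed, which encodes the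
condition `gcd(n, q) = 1`. -/
noncomputable def weight (A : ℕ → ℕ → ℝ) (S : Finset ℕ) (q p : ℕ) : ℝ :=
  if p ∈ S then (if p ∣ q then 0 else 1) else (A p 0)⁻¹

/-- The local data whose `eulerTerm` is, up to a constant, the summand `(θ ∗ μ)(n) / n` restricted
to `gcd(n, q) = 1`. The value at `ν = 0` is used only for `p ∈ S`. -/
noncomputable def normalizedTerm (A : ℕ → ℕ → ℝ) (S : Finset ℕ) (q p ν : ℕ) : ℝ :=
  if ν = 0 then A p 0 else weight A S q p * localTerm A p ν

theorem normalizedTerm_succ (A : ℕ → ℕ → ℝ) (S : Finset ℕ) (q p ν : ℕ) :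
    normalizedTerm A S q p (ν + 1) = weight A S q p * localTerm A p (ν + 1) := by
  simp [normalizedTerm]

theorem SmallCond.locallySummable {b : ℕ} {C₁ C₂ C₃ c : ℝ} {A : ℕ → ℕ → ℝ} (hb : 0 < b)
    (hC₁ : 1 ≤ C₁) (hC₂ : 1 ≤ C₂) (h : SmallCond b C₁ C₂ C₃ c A) {m : ℕ} (hm : 0 < m) (q : ℕ)
    (hA : ∀ᶠ p : ℕ in Filter.cofinite, p.Prime → ¬ p ∣ m → 1 / 2 ≤ |A p 0|) :
    LocallySummable (normalizedTerm A m.primeFactors q) := by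
  have hloc : ∀ p : ℕ, p.Prime →
      Summable fun ν : ℕ => |normalizedTerm A m.primeFactors q p (ν + 1)| := fun p hp => by
    simp only [normalizedTerm_succ, abs_mul]
    exact (h.summable_localTerm hC₁ hC₂ hp).mul_left _
  refine ⟨hloc, ?_⟩
  have hfin : ∀ k : ℕ, 0 < k → ∀ᶠ p : ℕ in Filter.cofinite, ¬ p ∣ k := fun k hk =>
    Filter.eventually_cofinite.2 (k.divisors.finite_toSet.subset fun p hp => by
      simpa [hk.ne'] using hp)
  have hg : Summable fun p : ℕ => 2 * C₂ * (4 / 3) * (1 / (p : ℝ) ^ 2) :=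
    (Real.summable_one_div_nat_pow.2 (by norm_num)).mul_left _
  refine hg.of_norm_bounded_eventually ?_
  filter_upwards [hA, hfin b hb, hfin m hm] with p hp hpb hpm
  split_ifs with hpr
  swap
  · rw [norm_zero]
    positivity
  have hw : |weight A m.primeFactors q p| ≤ 2 := by
    have h2 := hp hpr hpm
    rw [weight, if_neg (by simp [hpm]), abs_inv]
    calc |A p 0|⁻¹ ≤ (1 / 2 : ℝ)⁻¹ := by gcongr
      _ = 2 := by norm_num
  have hgeo : HasSum (fun ν : ℕ => 2 * (C₂ / (p : ℝ) ^ 2) * (1 / 4) ^ ν)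
      (2 * (C₂ / (p : ℝ) ^ 2) * (4 / 3)) := by
    have := (hasSum_geometric_of_lt_one (r := (1 / 4 : ℝ)) (by norm_num) (by norm_num)).mul_left
      (2 * (C₂ / (p : ℝ) ^ 2))
    rwa [show (1 - 1 / 4 : ℝ)⁻¹ = 4 / 3 by norm_num] at this
  rw [Real.norm_eq_abs, abs_of_nonneg (tsum_nonneg fun _ => abs_nonneg _)]
  calc ∑' ν : ℕ, |normalizedTerm A m.primeFactors q p (ν + 1)|
      ≤ 2 * (C₂ / (p : ℝ) ^ 2) * (4 / 3) := by
        refine hasSum_le (fun ν => ?_) (hloc p hpr).hasSum hgeo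
        rw [normalizedTerm_succ, abs_mul, mul_assoc]
        exact mul_le_mul hw (h.abs_localTerm_le hC₂ hpr hpb ν) (abs_nonneg _) (by norm_num)
    _ = _ := by ring

theorem LocallySummable.multipliable {a : ℕ → ℕ → ℝ} (ha : LocallySummable a) (S : Finset ℕ) :
    Multipliable fun p : ℕ => if p.Prime ∧ p ∉ S then 1 + ∑' ν : ℕ, a p (ν + 1) else 1 := by
  have h1 : Summable fun p : ℕ =>
      ‖if p.Prime ∧ p ∉ S then ∑' ν : ℕ, a p (ν + 1) else 0‖ := by
    refine Summable.of_nonneg_of_le (fun _ => norm_nonneg _) (fun p => ?_) ha.total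
    by_cases hp : p.Prime
    · rw [if_pos hp]
      split_ifs
      · exact norm_tsum_le_tsum_norm (ha.at_prime p hp)
      · rw [norm_zero]
        exact tsum_nonneg fun _ => abs_nonneg _
    · simp [hp]
  refine (multipliable_one_add_of_summable h1).congr fun p => ?_
  split_ifs <;> simp

/-- Both `∏_{p ∤ n} A_p(0)` and `∏_{p ∤ m} A_p(0)` are compared with `∏_{p ∤ nm} A_p(0)`; the
primes dividing `n` but not `m` account for the normalization by `A_p(0)`, which is nonzero there. -/
theorem EulerRep.dconv_div_eq_eulerTerm {θ : ℕ → ℝ} {c : ℝ} {A : ℕ → ℕ → ℝ}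
    (h : EulerRep θ c A) {m q : ℕ} (hm : 0 < m) (hqm : q ∣ m)
    (hA : ∀ p : ℕ, p.Prime → ¬ p ∣ m → A p 0 ≠ 0) (n : ℕ) :
    (if 0 < n ∧ Nat.gcd n q = 1 then dconv θ n / n else 0)
      = c * awayProd A m * eulerTerm m.primeFactors (normalizedTerm A m.primeFactors q) n := by
  set S := m.primeFactors with hS
  rcases Nat.eq_zero_or_pos n with rfl | hn
  · simp [eulerTerm]
  have hv : ∀ p, p ∈ n.primeFactors → n.factorization p ≠ 0 := fun p hp => by
    rwa [← Nat.support_factorization, Finsupp.mem_support_iff] at hp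
  by_cases hg : Nat.gcd n q = 1
  swap
  · obtain ⟨p, hp, hpg⟩ := Nat.exists_prime_and_dvd hg
    have hpn := hpg.trans (Nat.gcd_dvd_left n q)
    have hpq := hpg.trans (Nat.gcd_dvd_right n q)
    have hpS : p ∈ S := Nat.mem_primeFactors.2 ⟨hp, hpq.trans hqm, hm.ne'⟩
    have hz : ∏ p ∈ S, normalizedTerm A S q p (n.factorization p) = 0 :=
      Finset.prod_eq_zero hpS (by
        rw [normalizedTerm, if_neg (hv p (Nat.mem_primeFactors.2 ⟨hp, hpn, hn.ne'⟩)), weight,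
          if_pos hpS, if_pos hpq, zero_mul])
    simp [hg, eulerTerm, hz]
  rw [if_pos ⟨hn, hg⟩, h.dconv_eq hn, eulerTerm, if_neg hn.ne']
  have hW1 := awayProd_of_dvd h.2.1 (Nat.mul_pos hn hm) (dvd_mul_right n m)
  have hW2 := awayProd_of_dvd h.2.1 (Nat.mul_pos hn hm) (dvd_mul_left m n)
  rw [Nat.primeFactors_mul hn.ne' hm.ne', ← hS] at hW1 hW2
  rw [Finset.union_sdiff_left] at hW1
  rw [Finset.union_sdiff_right] at hW2
  rw [hW1, hW2]
  have hloc : (∏ p ∈ n.primeFactors, (A p (n.factorization p) - A p (n.factorization p - 1))) / n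
      = ∏ p ∈ n.primeFactors, localTerm A p (n.factorization p) := by
    simp only [localTerm, Finset.prod_div_distrib]
    congr 1
    conv_lhs => rw [← Nat.prod_factorization_pow_eq_self hn.ne']
    rw [Finsupp.prod, Nat.support_factorization]
    push_cast
    rfl
  have hSn : ∏ p ∈ S, normalizedTerm A S q p (n.factorization p)
      = (∏ p ∈ S \ n.primeFactors, A p 0) *
        ∏ p ∈ n.primeFactors ∩ S, localTerm A p (n.factorization p) := by
    rw [← Finset.prod_sdiff (Finset.inter_subset_right (s₁ := n.primeFactors) (s₂ := S)),
      Finset.sdiff_inter_self_right]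
    congr 1
    · refine Finset.prod_congr rfl fun p hp => ?_
      have := (Finset.mem_sdiff.1 hp).2
      rw [← Nat.support_factorization, Finsupp.notMem_support_iff] at this
      rw [normalizedTerm, if_pos this]
    · refine Finset.prod_congr rfl fun p hp => ?_
      obtain ⟨hpn, hpS⟩ := Finset.mem_inter.1 hp
      have hpq : ¬ p ∣ q := fun hpq =>
        (Nat.prime_of_mem_primeFactors hpn).one_lt.ne'
          (Nat.eq_one_of_dvd_one (hg ▸ Nat.dvd_gcd (Nat.dvd_of_mem_primeFactors hpn) hpq))
      rw [normalizedTerm, if_neg (hv p hpn), weight, if_pos hpS, if_neg hpq, one_mul]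
  have hnS : ∏ p ∈ n.primeFactors \ S, normalizedTerm A S q p (n.factorization p)
      = (∏ p ∈ n.primeFactors \ S, A p 0)⁻¹ *
        ∏ p ∈ n.primeFactors \ S, localTerm A p (n.factorization p) := by
    rw [← Finset.prod_inv_distrib, ← Finset.prod_mul_distrib]
    refine Finset.prod_congr rfl fun p hp => ?_
    obtain ⟨hpn, hpS⟩ := Finset.mem_sdiff.1 hp
    rw [normalizedTerm, if_neg (hv p hpn), weight, if_neg hpS]
  have hne : ∏ p ∈ n.primeFactors \ S, A p 0 ≠ 0 := Finset.prod_ne_zero_iff.2 fun p hp => by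
    obtain ⟨hpn, hpS⟩ := Finset.mem_sdiff.1 hp
    have hpr := Nat.prime_of_mem_primeFactors hpn
    exact hA p hpr fun hd => hpS (Nat.mem_primeFactors.2 ⟨hpr, hd, hm.ne'⟩)
  have hsplit := Finset.prod_inter_mul_prod_sdiff n.primeFactors S
    fun p => localTerm A p (n.factorization p)
  rw [hSn, hnS]
  rw [show ∀ x y z w : ℝ, x * y * z / w = x * (y / w) * z by intros; ring, hloc, ← hsplit]
  field_simp

/-- For non-trivial `θ ∈ Θ₂(b, C₁, C₂, C₃)` and any `q ≥ 1`, the sum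
`∑_{gcd(n,q)=1} (θ∗μ)(n)/n` and the product
`c ∏_{p ∤ q} [(1 - 1/p) ∑_ν A_p(ν)/p^ν] ∏_{p | q} A_p(0)` both converge, to the same value. -/
theorem hasSum_dconv_eq_prod (b : ℕ) (C₁ C₂ C₃ : ℝ) (θ : ℕ → ℝ) (c : ℝ) (A : ℕ → ℕ → ℝ)
    (hb : 0 < b) (hC₁ : 1 ≤ C₁) (hC₂ : 1 ≤ C₂) (hC₃ : 1 ≤ C₃)
    (hθ0 : ∀ n : ℕ, 0 ≤ θ n)
    (hne : ∃ n : ℕ, 0 < n ∧ θ n ≠ 0)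
    (hrep : EulerRep θ c A)
    (hsmall : SmallCond b C₁ C₂ C₃ c A) :
    ∀ q : ℕ, 0 < q →
      (∀ p : ℕ, p.Prime → ¬ p ∣ q → Summable (fun ν : ℕ => A p ν / (p : ℝ) ^ ν)) ∧
      Multipliable (fun p : {p : ℕ // p.Prime ∧ ¬ p ∣ q} =>
        (1 - 1 / (p.1 : ℝ)) * ∑' ν : ℕ, A p.1 ν / (p.1 : ℝ) ^ ν) ∧
      HasSum (fun n : ℕ => if 0 < n ∧ Nat.gcd n q = 1 then dconv θ n / n else 0)
        (c * (∏' p : {p : ℕ // p.Prime ∧ ¬ p ∣ q},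
            (1 - 1 / (p.1 : ℝ)) * ∑' ν : ℕ, A p.1 ν / (p.1 : ℝ) ^ ν) *
          ∏ p ∈ q.primeFactors, A p 0) := by
  intro q hq
  obtain ⟨n₀, hn₀, hθn₀⟩ := hne
  have hsum : ∀ p : ℕ, p.Prime → Summable (fun ν : ℕ => A p ν / (p : ℝ) ^ ν) :=
    fun p hp => hsmall.summable_div_pow hC₁ hC₂ hp
  have hW₀ : awayProd A n₀ ≠ 0 := fun h0 => hθn₀ (by
    rw [hrep.2.2 n₀ hn₀]
    exact mul_eq_zero_of_right _ h0)
  -- `A p 0 ≠ 0` at all primes not dividing `n₀`; multiplying by `q` makes every prime of `q`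
  -- exceptional too.
  set m := n₀ * q with hmdef
  have hm : 0 < m := Nat.mul_pos hn₀ hq
  have hqm : q ∣ m := dvd_mul_left q n₀
  have hW : awayProd A m ≠ 0 := by
    rw [awayProd_of_dvd hrep.2.1 hm (dvd_mul_right n₀ q)] at hW₀
    exact right_ne_zero_of_mul hW₀
  have hP : HasProd (fun p : ℕ => if p.Prime ∧ ¬ p ∣ m then A p 0 else 1) (awayProd A m) :=
    (hasProd_subtype_iff_ite (fun p => p.Prime ∧ ¬ p ∣ m) (fun p => A p 0) _).1
      (hrep.2.1 m hm).hasProd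
  have hA0 : ∀ p : ℕ, p.Prime → ¬ p ∣ m → A p 0 ≠ 0 := fun p hp hpm h0 => hW <| by
    refine hP.unique (hasProd_zero_of_exists_eq_zero ⟨p, ?_⟩)
    rw [if_pos ⟨hp, hpm⟩, h0]
  have hls : LocallySummable (normalizedTerm A m.primeFactors q) := by
    refine hsmall.locallySummable hb hC₁ hC₂ hm q ?_
    filter_upwards [eventually_half_le_abs_of_hasProd hP hW] with p hp hpr hpm
    rwa [if_pos ⟨hpr, hpm⟩] at hp
  set a := normalizedTerm A m.primeFactors q with ha
  -- `R` is the product of the normalized factors `B p / A p 0` over the primes not dividing `m`.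
  obtain ⟨R, hR⟩ := hls.multipliable m.primeFactors
  set B : ℕ → ℝ := fun p => (1 - 1 / (p : ℝ)) * ∑' ν : ℕ, A p ν / (p : ℝ) ^ ν with hBdef
  have hB : ∀ p : ℕ, p.Prime → B p = A p 0 + ∑' ν : ℕ, localTerm A p (ν + 1) :=
    fun p hp => one_sub_inv_mul_tsum hp (hsum p hp)
  have hta : ∀ p, ∑' ν : ℕ, a p (ν + 1)
      = weight A m.primeFactors q p * ∑' ν : ℕ, localTerm A p (ν + 1) := fun p => by
    simp only [ha, normalizedTerm_succ, tsum_mul_left]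
  have hBm : HasProd (fun p : {p : ℕ // p.Prime ∧ ¬ p ∣ m} => B p.1) (awayProd A m * R) := by
    rw [hasProd_subtype_iff_ite (fun p => p.Prime ∧ ¬ p ∣ m) B]
    have e : (fun p : ℕ => if p.Prime ∧ ¬ p ∣ m then B p else 1) = fun p =>
        (if p.Prime ∧ ¬ p ∣ m then A p 0 else 1) *
          if p.Prime ∧ p ∉ m.primeFactors then 1 + ∑' ν : ℕ, a p (ν + 1) else 1 := by
      funext p
      by_cases hp : p.Prime ∧ ¬ p ∣ m
      · have hpm : p ∉ m.primeFactors := fun h => hp.2 (Nat.dvd_of_mem_primeFactors h)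
        have h0 := hA0 p hp.1 hp.2
        rw [if_pos hp, if_pos hp, if_pos ⟨hp.1, hpm⟩, hta, weight, if_neg hpm, hB p hp.1]
        field_simp
      · have hp' : ¬ (p.Prime ∧ p ∉ m.primeFactors) := fun h =>
          hp ⟨h.1, fun hd => h.2 (Nat.mem_primeFactors.2 ⟨h.1, hd, hm.ne'⟩)⟩
        rw [if_neg hp, if_neg hp, if_neg hp', one_mul]
    rw [e]
    exact hP.mul hR
  have hBq := hasProd_away_of_dvd B hm hqm hBm
  refine ⟨fun p hp _ => hsum p hp, hBq.multipliable, ?_⟩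
  have hmain := (hasSum_eulerTerm m.primeFactors
    (fun p hp => Nat.prime_of_mem_primeFactors hp) a hls R hR).mul_left (c * awayProd A m)
  have hprod : ∏ p ∈ m.primeFactors, (a p 0 + ∑' ν : ℕ, a p (ν + 1))
      = (∏ p ∈ m.primeFactors \ q.primeFactors, B p) * ∏ p ∈ q.primeFactors, A p 0 := by
    rw [← Finset.prod_sdiff (Nat.primeFactors_mono hqm hm.ne')]
    congr 1
    · refine Finset.prod_congr rfl fun p hp => ?_
      obtain ⟨hpm, hpq⟩ := Finset.mem_sdiff.1 hp
      have hpr := Nat.prime_of_mem_primeFactors hpm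
      have hpq' : ¬ p ∣ q := fun hd => hpq (Nat.mem_primeFactors.2 ⟨hpr, hd, hq.ne'⟩)
      rw [hta, weight, if_pos hpm, if_neg hpq', one_mul, hB p hpr]
      simp [ha, normalizedTerm]
    · refine Finset.prod_congr rfl fun p hp => ?_
      rw [hta, weight, if_pos (Nat.primeFactors_mono hqm hm.ne' hp),
        if_pos (Nat.dvd_of_mem_primeFactors hp), zero_mul, add_zero]
      simp [ha, normalizedTerm]
  have hfun : (fun n : ℕ => if 0 < n ∧ Nat.gcd n q = 1 then dconv θ n / n else 0)
      = fun n => c * awayProd A m * eulerTerm m.primeFactors a n :=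
    funext fun n => hrep.dconv_div_eq_eulerTerm hm hqm hA0 n
  have hval : c * (∏' p : {p : ℕ // p.Prime ∧ ¬ p ∣ q}, B p.1) * ∏ p ∈ q.primeFactors, A p 0
      = c * awayProd A m * ((∏ p ∈ m.primeFactors, (a p 0 + ∑' ν : ℕ, a p (ν + 1))) * R) := by
    rw [hBq.tprod_eq, hprod]
    ring
  rw [hfun]
  exact hval ▸ hmain
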